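/- The left star order on M_n(ℂ), defined by A ⋆≤ B if and only if A*A = A*B and the column space (range) of A is contained in the column space of B, is a partial order: it is reflexive, antisymmetric, and transitive. -/

import Mathlib

open Matrix

/-- Range inclusion gives a right factorization. -/
theorem exists_factor_of_range_le {n : ℕ} {A B : Matrix (Fin n) (Fin n) ℂ}
    (h : LinearMap.range A.mulVecLin ≤ LinearMap.range B.mulVecLin) :
    ∃ X : Matrix (Fin n) (Fin n) ℂ, A = B * X := by
  have h1 : ∀ j, ∃ v : Fin n → ℂ, B *ᵥ v = A.col j := by
    intro j
    have : A.col j ∈ LinearMap.range B.mulVecLin :=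
      h ⟨Pi.single j 1, by simp⟩
    simpa using this
  choose f hf using h1
  refine ⟨Matrix.of fun i j => f j i, ?_⟩
  ext i j
  have := congrFun (hf j) i
  simpa [Matrix.mul_apply, Matrix.mulVec, dotProduct] using this.symm

/-- The left star order on `M_n(ℂ)` is a partial order. -/
theorem left_star_order_partialOrder (n : ℕ) :
    Reflexive (fun A B : Matrix (Fin n) (Fin n) ℂ =>
      Aᴴ * A = Aᴴ * B ∧
        LinearMap.range A.mulVecLin ≤ LinearMap.range B.mulVecLin) ∧
    AntiSymmetric (fun A B : Matrix (Fin n) (Fin n) ℂ =>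
      Aᴴ * A = Aᴴ * B ∧
        LinearMap.range A.mulVecLin ≤ LinearMap.range B.mulVecLin) ∧
    Transitive (fun A B : Matrix (Fin n) (Fin n) ℂ =>
      Aᴴ * A = Aᴴ * B ∧
        LinearMap.range A.mulVecLin ≤ LinearMap.range B.mulVecLin) := by
  refine ⟨fun A => ⟨rfl, le_rfl⟩, ?_, ?_⟩
  · rintro A B ⟨h1, -⟩ ⟨h2, -⟩
    have h : (A - B)ᴴ * (A - B) = 0 := by
      rw [conjTranspose_sub, sub_mul, mul_sub, mul_sub, h1, h2]
      simp
    open scoped ComplexOrder in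
    exact sub_eq_zero.mp (conjTranspose_mul_self_eq_zero.mp h)
  · rintro A B C ⟨h1, h1'⟩ ⟨h2, h2'⟩
    refine ⟨?_, h1'.trans h2'⟩
    obtain ⟨X, hX⟩ := exists_factor_of_range_le h1'
    have h3 : Aᴴ * B = Aᴴ * C := by
      rw [hX, conjTranspose_mul, Matrix.mul_assoc, Matrix.mul_assoc, h2]
    exact h1.trans h3
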